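/- arXiv:math/0012155 — 4 statements merged into one kernel-verified Lean document; each statement's English description precedes it below -/
import Mathlib

section
/- For every g ∈ SL_n(K) there exist an element (σ,a,b) of the double affine Weyl group Ŵ and a lifting m of (σ,a,b) such that g ∈ D_0·m·D_0, and the element (σ,a,b) is uniquely determined by g: if m and m' are liftings of (σ,a,b) and (σ',a',b') and the double cosets D_0·m·D_0 and D_0·m'·D_0 intersect, then (σ,a,b) = (σ',a',b'). Thus D_0\SL_n(K)/D_0 is canonically identified with Ŵ. -/
/-!
Double coset decomposition of `SL_n(K)` over the two-dimensional local field
`K = F_q((t1))((t2))` with respect to the double Iwahori subgroup `D_0`: `SL_n(K)` is the disjoint union over the double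
affine Weyl group `Ŵ` (triples `(σ, a, b)`, `Σ a_k = Σ b_k = 0`) of the double
cosets `D_0 · m · D_0`, where `m` is any lifting of `(σ, a, b)`; the resulting
identification of `D_0 \ SL_n(K) / D_0` with `Ŵ` does not depend on the choice
of liftings.
-/

noncomputable section

/-- The first residue field `K1 = F_q((t1))`. -/
abbrev Kone (F : Type) [Field F] := LaurentSeries F

/-- The two-dimensional local field `K = K1((t2)) = F_q((t1))((t2))`. -/
abbrev Ktwo (F : Type) [Field F] := LaurentSeries (Kone F)

/-- The local parameter `t1` as an element of `K`. -/
def tone (F : Type) [Field F] : Ktwo F := HahnSeries.single 0 (HahnSeries.single 1 1)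

/-- The local parameter `t2` as an element of `K`. -/
def ttwo (F : Type) [Field F] : Ktwo F := HahnSeries.single 1 1

/-- `f ∈ O_{K2} = K1[[t2]]`. -/
def IsInt2 (F : Type) [Field F] (f : Ktwo F) : Prop := ∀ m : ℤ, m < 0 → f.coeff m = 0

/-- `x ∈ O_{K1} = F_q[[t1]]`. -/
def IsInt1 (F : Type) [Field F] (x : Kone F) : Prop := ∀ m : ℤ, m < 0 → x.coeff m = 0

/-- The double Iwahori subgroup
`D_0 = {g ∈ SL_n(O_{K2}) : p2(g) ∈ SL_n(O_{K1}), p1(p2(g)) ∈ B(F_q)}`. -/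
def Dzero (F : Type) [Field F] (n : ℕ) :
    Set (Matrix.SpecialLinearGroup (Fin n) (Ktwo F)) :=
  {g | ∀ i j : Fin n,
    IsInt2 F ((g : Matrix (Fin n) (Fin n) (Ktwo F)) i j) ∧
    IsInt1 F (((g : Matrix (Fin n) (Fin n) (Ktwo F)) i j).coeff 0) ∧
    (j < i → (((g : Matrix (Fin n) (Fin n) (Ktwo F)) i j).coeff 0).coeff 0 = 0)}

/-- `m` is a lifting of the element `(σ, a, b)` of the double affine Weyl group:
a monomial matrix with entries `m_{σ k, k} = ε_k · t1^{a_k} · t2^{b_k}`,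
`ε_k ∈ {1, -1}`. -/
def IsLifting (F : Type) [Field F] (n : ℕ) (σ : Equiv.Perm (Fin n))
    (a b : Fin n → ℤ) (m : Matrix.SpecialLinearGroup (Fin n) (Ktwo F)) : Prop :=
  ∃ ε : Fin n → Ktwo F, (∀ k, ε k = 1 ∨ ε k = -1) ∧
    ∀ i k : Fin n, (m : Matrix (Fin n) (Fin n) (Ktwo F)) i k =
      if i = σ k then ε k * (tone F) ^ (a k) * (ttwo F) ^ (b k) else 0

/-!
The group `D_0` is the Iwahori subgroup attached to the rank two valuation `v` of `K`, and the
argument works for any valued field. To reach a monomial matrix, choose among the entries of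
maximal valuation the one that is lowest, then leftmost: its row and its column can be cleared by
elements of the Iwahori subgroup, and repeating this outside the columns already treated produces
a monomial matrix. Conversely, in an equation `d * m = m' * d'` the matrices `d` and `d'` have
entries in the valuation ring and units on the diagonal; comparing entries forces
`v (m_{σ k, k}) = v (m'_{σ' k, k})` for all `k`, and then upper triangularity of `d` modulo the
maximal ideal gives `σ' k ≤ σ k`, hence `σ = σ'`.
-/

section LexValuation

open HahnSeries

variable {Γ Γ' R : Type*} [LinearOrder Γ] [LinearOrder Γ']

theorem orderTop_ofIterate [Zero Γ] [Zero Γ'] [Zero R] {x : HahnSeries Γ (HahnSeries Γ' R)}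
    (hx : x ≠ 0) :
    (ofIterate x).orderTop = (toLex (x.order, x.leadingCoeff.order) : Γ ×ₗ Γ') := by
  refine orderTop_eq_of_le ?_ fun g (hg : (x.coeff (ofLex g).1).coeff (ofLex g).2 ≠ 0) => ?_
  · change (x.coeff x.order).coeff x.leadingCoeff.order ≠ 0
    rw [← leadingCoeff_eq]
    exact coeff_order_eq_zero.not.2 (leadingCoeff_ne_zero.2 hx)
  · have hfst : x.order ≤ (ofLex g).1 := order_le_of_coeff_ne_zero fun h => hg (by simp [h])
    obtain hlt | heq := hfst.lt_or_eq
    · exact Prod.Lex.le_iff.2 (.inl hlt)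
    · refine Prod.Lex.le_iff.2 (.inr ⟨heq, order_le_of_coeff_ne_zero ?_⟩)
      rwa [leadingCoeff_eq, heq]

theorem toLex_le_orderTop_ofIterate [Zero R] {x : HahnSeries Γ (HahnSeries Γ' R)}
    {b : Γ} {a : Γ'} : ((toLex (b, a) : Γ ×ₗ Γ') : WithTop (Γ ×ₗ Γ')) ≤ (ofIterate x).orderTop ↔
      (∀ m < b, x.coeff m = 0) ∧ ∀ l < a, (x.coeff b).coeff l = 0 := by
  simp only [le_orderTop_iff_forall, WithTop.coe_lt_coe, Prod.Lex.lt_iff]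
  constructor
  · exact fun h => ⟨fun m hm => HahnSeries.ext <| funext fun l => h (toLex (m, l)) (.inl hm),
      fun l hl => h (toLex (b, l)) (.inr ⟨rfl, hl⟩)⟩
  · rintro ⟨hb, ha⟩ g (hg | ⟨rfl, hg⟩)
    · exact congrArg (coeff · (ofLex g).2) (hb _ hg)
    · exact ha _ hg

theorem toLex_lt_orderTop_ofIterate [Zero R] {x : HahnSeries Γ (HahnSeries Γ' R)}
    {b : Γ} {a : Γ'} : ((toLex (b, a) : Γ ×ₗ Γ') : WithTop (Γ ×ₗ Γ')) < (ofIterate x).orderTop ↔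
      (∀ m < b, x.coeff m = 0) ∧ ∀ l ≤ a, (x.coeff b).coeff l = 0 := by
  have hcoeff : (ofIterate x).coeff (toLex (b, a)) = (x.coeff b).coeff a := rfl
  constructor
  · intro h
    obtain ⟨hb, ha⟩ := toLex_le_orderTop_ofIterate.1 h.le
    refine ⟨hb, fun l hl => hl.lt_or_eq.elim (ha l) ?_⟩
    rintro rfl
    exact hcoeff ▸ coeff_eq_zero_of_lt_orderTop h
  · rintro ⟨hb, ha⟩
    exact (toLex_le_orderTop_ofIterate.2 ⟨hb, fun l hl => ha l hl.le⟩).lt_of_ne'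
      (orderTop_ne_of_coeff_eq_zero (hcoeff ▸ ha a le_rfl))

variable (Γ Γ' R) in
/-- The rank two valuation on iterated Hahn series: the pair formed by the order of a series and
the order of its leading coefficient, compared lexicographically with the outer order first. It is
encoded as the order of the Hahn series with exponents in the lexicographic product. -/
def iteratedAddVal [AddCommGroup Γ] [IsOrderedAddMonoid Γ] [AddCommGroup Γ']
    [IsOrderedAddMonoid Γ'] [Ring R] [IsDomain R] :
    AddValuation (HahnSeries Γ (HahnSeries Γ' R)) (WithTop (Γ ×ₗ Γ')) :=
  AddValuation.of (fun x => (ofIterate x).orderTop) orderTop_zero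
    (by rw [orderTop_ofIterate one_ne_zero, leadingCoeff_one, order_one, order_one]; rfl)
    (fun x y => min_orderTop_le_orderTop_add (x := ofIterate x) (y := ofIterate y))
    fun x y => by
      have orderTop_ofIterate_zero :
          (ofIterate (0 : HahnSeries Γ (HahnSeries Γ' R))).orderTop = ⊤ := orderTop_zero
      by_cases hx : x = 0
      · rw [hx, zero_mul, orderTop_ofIterate_zero, top_add]
      by_cases hy : y = 0
      · rw [hy, mul_zero, orderTop_ofIterate_zero, add_top]
      rw [orderTop_ofIterate hx, orderTop_ofIterate hy, orderTop_ofIterate (mul_ne_zero hx hy),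
        order_mul hx hy, leadingCoeff_mul,
        order_mul (leadingCoeff_ne_zero.2 hx) (leadingCoeff_ne_zero.2 hy)]
      rfl

end LexValuation

section Monomial

open Matrix

/-- The monomial matrix whose only nonzero entry in column `k` is `w k`, in row `σ k`. -/
def monomialMatrix {ι R : Type*} [DecidableEq ι] [Zero R] (σ : Equiv.Perm ι) (w : ι → R) :
    Matrix ι ι R :=
  of fun i k => if i = σ k then w k else 0

variable {ι R : Type*} [DecidableEq ι] [CommRing R]

theorem monomialMatrix_eq_submatrix_diagonal (σ : Equiv.Perm ι) (w : ι → R) :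
    monomialMatrix σ w = (diagonal w).submatrix σ.symm id := by
  ext i k
  obtain ⟨l, rfl⟩ := σ.surjective i
  by_cases h : l = k <;> simp [monomialMatrix, h]

variable [Fintype ι]

theorem det_monomialMatrix (σ : Equiv.Perm ι) (w : ι → R) :
    (monomialMatrix σ w).det = (Equiv.Perm.sign σ : ℤ) * ∏ k, w k := by
  rw [monomialMatrix_eq_submatrix_diagonal, det_permute, det_diagonal, Equiv.Perm.sign_symm]

theorem monomialMatrix_mul_diagonal (σ : Equiv.Perm ι) (w u : ι → R) :
    monomialMatrix σ w * diagonal u = monomialMatrix σ (w * u) := by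
  ext i k
  simp [monomialMatrix, mul_diagonal]

theorem monomialMatrix_mul_apply (σ : Equiv.Perm ι) (w : ι → R) (M : Matrix ι ι R) (l k : ι) :
    (monomialMatrix σ w * M) (σ l) k = w l * M l k := by
  simp [monomialMatrix, mul_apply]

theorem mul_monomialMatrix_apply (σ : Equiv.Perm ι) (w : ι → R) (M : Matrix ι ι R) (i k : ι) :
    (M * monomialMatrix σ w) i k = M i (σ k) * w k := by
  simp [monomialMatrix, mul_apply]

end Monomial

section Permutations

variable {ι α : Type*} [Finite ι] [PartialOrder α]

theorem comp_perm_eq_of_le_comp_perm (τ : Equiv.Perm ι) {f : ι → α} (h : ∀ k, f k ≤ f (τ k)) :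
    f ∘ τ = f := by
  ext k
  have hmono : Monotone fun j : ℕ => f ((τ ^ j) k) := monotone_nat_of_le_succ fun j => by
    rw [pow_succ', Equiv.Perm.mul_apply]
    exact h _
  have hle : f ((τ ^ 1) k) ≤ f ((τ ^ orderOf τ) k) := hmono (orderOf_pos τ)
  rw [pow_one, pow_orderOf_eq_one] at hle
  exact hle.antisymm (h k)

theorem perm_eq_of_apply_le [PartialOrder ι] {σ τ : Equiv.Perm ι} (h : ∀ k, σ k ≤ τ k) :
    σ = τ := by
  have := comp_perm_eq_of_le_comp_perm (σ⁻¹.trans τ) (f := id) fun k => by simpa using h (σ⁻¹ k)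
  ext k
  simpa using (congrFun this (σ k)).symm

end Permutations

section Iwahori

open Matrix SpecialLinearGroup

variable {ι : Type*} [LinearOrder ι] [Fintype ι]

variable (ι) in
/-- The standard Borel subgroup of `SL`: the upper triangular matrices. -/
def borelSubgroup (k : Type*) [CommRing k] : Subgroup (SpecialLinearGroup ι k) where
  carrier := {g | g.1.IsUpperTriangular}
  mul_mem' := BlockTriangular.mul
  one_mem' := blockTriangular_one
  inv_mem' {g} hg := by
    let _ : Invertible g.1 := ⟨(g⁻¹).1, congrArg Subtype.val (inv_mul_cancel g),
      congrArg Subtype.val (mul_inv_cancel g)⟩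
    have hinv : (g⁻¹).1 = g.1⁻¹ := invOf_eq_nonsing_inv g.1
    change (g⁻¹).1.IsUpperTriangular
    rw [hinv]
    exact blockTriangular_inv_of_blockTriangular hg

variable {K Γ₀ : Type*} [Field K] [LinearOrderedCommGroupWithZero Γ₀] (v : Valuation K Γ₀)

variable (ι) in
/-- The Iwahori subgroup of `SL` over a valued field: the matrices with integral entries whose
reduction modulo the maximal ideal is upper triangular. -/
def iwahoriSubgroup : Subgroup (SpecialLinearGroup ι K) :=
  ((borelSubgroup ι (IsLocalRing.ResidueField v.valuationSubring)).comap
    (map (IsLocalRing.residue v.valuationSubring))).map (map v.valuationSubring.subtype)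

variable {v}

theorem mem_iwahoriSubgroup {g : SpecialLinearGroup ι K} :
    g ∈ iwahoriSubgroup ι v ↔ ∀ i j, v (g i j) ≤ 1 ∧ (j < i → v (g i j) < 1) := by
  have residue_eq_zero (x : v.valuationSubring) :
      IsLocalRing.residue v.valuationSubring x = 0 ↔ v x < 1 := by
    rw [IsLocalRing.residue_eq_zero_iff, v.mem_maximalIdeal_iff]
  constructor
  · rintro ⟨N, hN, rfl⟩ i j
    exact ⟨(N i j).2, fun hij => (residue_eq_zero _).1 (hN hij)⟩
  · intro h
    let N : Matrix ι ι v.valuationSubring := of fun i j => ⟨g i j, (h i j).1⟩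
    have hN : N.map v.valuationSubring.subtype = g.1 := rfl
    have hdet : N.det = 1 := v.valuationSubring.subtype_injective <| by
      rw [RingHom.map_det, RingHom.mapMatrix_apply, hN, g.2, map_one]
    exact ⟨⟨N, hdet⟩, fun i j hij => (residue_eq_zero _).2 ((h i j).2 hij), Subtype.ext hN⟩

theorem valuation_apply_le_one_of_mem_iwahoriSubgroup {g : SpecialLinearGroup ι K}
    (hg : g ∈ iwahoriSubgroup ι v) (i j : ι) : v (g i j) ≤ 1 :=
  (mem_iwahoriSubgroup.1 hg i j).1

theorem valuation_diag_of_mem_iwahoriSubgroup {g : SpecialLinearGroup ι K}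
    (hg : g ∈ iwahoriSubgroup ι v) (i : ι) : v (g i i) = 1 := by
  obtain ⟨N, hN, rfl⟩ := hg
  have hprod : ∏ l, IsLocalRing.residue v.valuationSubring (N l l) = 1 :=
    (det_of_isUpperTriangular hN).symm.trans (map (IsLocalRing.residue _) N).2
  have hi : IsLocalRing.residue v.valuationSubring (N i i) ≠ 0 :=
    Finset.prod_ne_zero_iff.1 (hprod ▸ one_ne_zero) i (Finset.mem_univ i)
  rw [Ne, IsLocalRing.residue_eq_zero_iff, v.mem_maximalIdeal_iff, not_lt] at hi
  exact le_antisymm (N i i).2 hi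

end Iwahori

section DoubleCosets

open Matrix DoubleCoset

variable {ι K Γ₀ : Type*} [LinearOrder ι] [Fintype ι] [Field K]
  [LinearOrderedCommGroupWithZero Γ₀] {v : Valuation K Γ₀}

/-- Comparing entries gives `v (w k) ≤ v (w' (τ k)) ≤ v (w (τ k))` for `τ = σ'⁻¹ σ`, so that `v ∘ w`
is constant on the cycles of `τ` and all these inequalities are equalities. -/
theorem eq_of_mul_monomialMatrix_eq {σ σ' : Equiv.Perm ι} {w w' : ι → K} (hw : ∀ k, w k ≠ 0)
    {d d' : SpecialLinearGroup ι K} (hd : d ∈ iwahoriSubgroup ι v) (hd' : d' ∈ iwahoriSubgroup ι v)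
    (h : d.1 * monomialMatrix σ w = monomialMatrix σ' w' * d'.1) :
    σ = σ' ∧ ∀ k, v (w k) = v (w' k) := by
  have entry (l k) : v (d (σ' l) (σ k)) * v (w k) = v (w' l) * v (d' l k) := by
    rw [← map_mul, ← map_mul]
    exact congrArg v ((mul_monomialMatrix_apply ..).symm.trans
      ((congrFun₂ h _ _).trans (monomialMatrix_mul_apply ..)))
  have hw'_eq (k) : v (w' k) = v (d (σ' k) (σ k)) * v (w k) := by
    rw [entry, valuation_diag_of_mem_iwahoriSubgroup hd', mul_one]
  have hw'_le (k) : v (w' k) ≤ v (w k) :=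
    hw'_eq k ▸ mul_le_of_le_one_left' (valuation_apply_le_one_of_mem_iwahoriSubgroup hd _ _)
  let τ := σ.trans σ'.symm
  have hw_le (k) : v (w k) ≤ v (w' (τ k)) := by
    have hk := entry (τ k) k
    rw [show σ' (τ k) = σ k from σ'.apply_symm_apply _, valuation_diag_of_mem_iwahoriSubgroup hd,
      one_mul] at hk
    exact hk ▸ mul_le_of_le_one_right' (valuation_apply_le_one_of_mem_iwahoriSubgroup hd' _ _)
  have hcycle : (fun k => v (w k)) ∘ τ = fun k => v (w k) :=
    comp_perm_eq_of_le_comp_perm τ fun k => (hw_le k).trans (hw'_le _)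
  have hval (k) : v (w k) = v (w' k) := by
    obtain ⟨l, rfl⟩ := τ.surjective k
    exact ((congrFun hcycle l).trans_le (hw_le l)).antisymm (hw'_le _)
  refine ⟨(perm_eq_of_apply_le fun k => ?_).symm, hval⟩
  by_contra! hlt
  refine (((mem_iwahoriSubgroup.1 hd _ _).2 hlt).ne ?_)
  exact mul_right_cancel₀ (v.ne_zero_iff.2 (hw k)) (by rw [one_mul, ← hw'_eq, hval])

theorem mem_doubleCoset_monomialMatrix_iff {σ σ' : Equiv.Perm ι} {w w' : ι → K}
    {m m' : SpecialLinearGroup ι K} (hm : m.1 = monomialMatrix σ w)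
    (hm' : m'.1 = monomialMatrix σ' w') (hw : ∀ k, w k ≠ 0) :
    m' ∈ doubleCoset m (iwahoriSubgroup ι v) (iwahoriSubgroup ι v) ↔
      σ = σ' ∧ ∀ k, v (w k) = v (w' k) := by
  rw [mem_doubleCoset]
  constructor
  · rintro ⟨d, hd, d', hd', h⟩
    have hcomm : d * m = m' * d'⁻¹ := eq_mul_inv_of_mul_eq h.symm
    refine eq_of_mul_monomialMatrix_eq hw hd (inv_mem hd') ?_
    rw [← hm, ← hm']
    exact congrArg Subtype.val hcomm
  · rintro ⟨rfl, hval⟩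
    have hdiag : m.1 * diagonal (w' / w) = m'.1 := by
      rw [hm, hm', monomialMatrix_mul_diagonal]
      congr
      ext k
      exact mul_div_cancel₀ _ (hw k)
    have hdet : (diagonal (w' / w)).det = 1 := by
      simpa only [det_mul, m.2, m'.2, one_mul] using congrArg det hdiag
    refine ⟨1, one_mem _, ⟨_, hdet⟩, mem_iwahoriSubgroup.2 fun i j => ?_, ?_⟩
    · change v (diagonal (w' / w) i j) ≤ 1 ∧ (j < i → v (diagonal (w' / w) i j) < 1)
      obtain rfl | hij := eq_or_ne i j
      · simp [← hval, hw]
      · simp [diagonal_apply_ne _ hij]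
    · rw [one_mul]
      exact Subtype.ext hdiag.symm

end DoubleCosets

section Elimination

open Matrix

section Isolated

variable {ι R : Type*} [Zero R]

/-- The entry of `M` in row `i` and column `k` is nonzero, and it is the only nonzero entry in its
row and in its column. -/
structure IsIsolated (M : Matrix ι ι R) (i k : ι) : Prop where
  ne_zero : M i k ≠ 0
  col_eq_zero : ∀ j ≠ i, M j k = 0
  row_eq_zero : ∀ l ≠ k, M i l = 0

/-- The columns that already have the shape of a column of a monomial matrix; elimination
enlarges this set. -/
def isolatedColumns (M : Matrix ι ι R) : Set ι := {k | ∃ i, IsIsolated M i k}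

theorem IsIsolated.ne_and_ne_of_notMem {M : Matrix ι ι R} {i k r l : ι} (h : IsIsolated M r l)
    (hik : M i k ≠ 0) (hk : k ∉ isolatedColumns M) : i ≠ r ∧ k ≠ l := by
  have hkl : k ≠ l := fun hkl => hk ⟨r, hkl ▸ h⟩
  exact ⟨fun hir => hik (hir ▸ h.row_eq_zero k hkl), hkl⟩

theorem exists_eq_monomialMatrix_of_isolatedColumns_eq_univ [DecidableEq ι] [Finite ι]
    {M : Matrix ι ι R} (hM : isolatedColumns M = Set.univ) :
    ∃ (σ : Equiv.Perm ι) (w : ι → R), (∀ k, w k ≠ 0) ∧ M = monomialMatrix σ w := by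
  choose s hs using Set.eq_univ_iff_forall.1 hM
  have hinj : Function.Injective s := fun k l hkl => by
    by_contra hne
    exact (hs l).ne_zero (hkl ▸ (hs k).row_eq_zero l (Ne.symm hne))
  refine ⟨.ofBijective s (Finite.injective_iff_bijective.1 hinj), fun k => M (s k) k,
    fun k => (hs k).ne_zero, ?_⟩
  ext i k
  obtain rfl | hik := eq_or_ne i (s k)
  · simp [monomialMatrix]
  · simp [monomialMatrix, hik, (hs k).col_eq_zero i hik]

end Isolated

theorem det_one_add_vecMulVec {ι R : Type*} [DecidableEq ι] [Fintype ι] [CommRing R]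
    {u w : ι → R} (h : w ⬝ᵥ u = 0) :
    (1 + vecMulVec u w).det = 1 := by
  rw [vecMulVec_eq Unit, det_one_add_replicateCol_mul_replicateRow, h, add_zero]

variable {ι K : Type*} [DecidableEq ι] [Field K]

/-- The multiples of row `i` to be added to the rows of `M` in order to clear column `k` outside
the position `(i, k)`. -/
def eliminationVector (M : Matrix ι ι K) (i k : ι) : ι → K :=
  fun j => if j = i then 0 else -(M j k / M i k)

/-- The result of clearing the row and the column of the position `(i, k)` in `M`: the pivot
`M i k` together with its Schur complement. -/
def pivotReduction (M : Matrix ι ι K) (i k : ι) : Matrix ι ι K :=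
  of fun j l => M j l - M j k * M i l / M i k + if j = i ∧ l = k then M i k else 0

theorem eliminate_mul_mul_eliminate [Fintype ι] {M : Matrix ι ι K} {i k : ι} (hik : M i k ≠ 0) :
    (1 + vecMulVec (eliminationVector M i k) (Pi.single i 1)) * M *
      (1 + vecMulVec (Pi.single k 1) (eliminationVector Mᵀ k i)) = pivotReduction M i k := by
  ext j l
  have hleft (l) : ((1 + vecMulVec (eliminationVector M i k) (Pi.single i 1)) * M) j l =
      M j l + eliminationVector M i k j * M i l := by
    simp [add_mul, vecMulVec_mul, vecMulVec_apply]
  have hright (A : Matrix ι ι K) :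
      (A * (1 + vecMulVec (Pi.single k 1) (eliminationVector Mᵀ k i))) j l =
        A j l + A j k * eliminationVector Mᵀ k i l := by
    simp [mul_add, mul_vecMulVec, vecMulVec_apply]
  have hcleared : M j k + eliminationVector M i k j * M i k = if j = i then M i k else 0 := by
    rw [eliminationVector]
    split_ifs with hj
    · simp [hj]
    · simp [hik]
  rw [hright, hleft, hleft, hcleared, pivotReduction, of_apply]
  by_cases hj : j = i <;> by_cases hl : l = k <;>
    simp only [eliminationVector, transpose_apply, hj, hl, and_self, and_true, and_false, if_true,
      if_false] <;> field

theorem isIsolated_pivotReduction_self {M : Matrix ι ι K} {i k : ι} (hik : M i k ≠ 0) :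
    IsIsolated (pivotReduction M i k) i k where
  ne_zero := by simp [pivotReduction, hik]
  col_eq_zero j hj := by simp [pivotReduction, hik, hj]
  row_eq_zero l hl := by simp [pivotReduction, hik, hl]

theorem IsIsolated.isIsolated_pivotReduction {M : Matrix ι ι K} {i k r l : ι}
    (h : IsIsolated M r l) (hr : i ≠ r) (hl : k ≠ l) : IsIsolated (pivotReduction M i k) r l where
  ne_zero := by simpa [pivotReduction, h.row_eq_zero k hl, hr.symm] using h.ne_zero
  col_eq_zero j hj := by
    simp [pivotReduction, h.col_eq_zero j hj, h.col_eq_zero i hr, hl.symm]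
  row_eq_zero j hj := by
    simp [pivotReduction, h.row_eq_zero j hj, h.row_eq_zero k hl, hr.symm]

theorem isolatedColumns_ssubset_pivotReduction {M : Matrix ι ι K} {i k : ι} (hik : M i k ≠ 0)
    (hk : k ∉ isolatedColumns M) :
    isolatedColumns M ⊂ isolatedColumns (pivotReduction M i k) := by
  refine Set.ssubset_iff_of_subset ?_ |>.2 ⟨k, ⟨i, isIsolated_pivotReduction_self hik⟩, hk⟩
  rintro l ⟨r, hrl⟩
  obtain ⟨hir, hkl⟩ := hrl.ne_and_ne_of_notMem hik hk
  exact ⟨r, hrl.isIsolated_pivotReduction hir hkl⟩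

end Elimination

section BruhatDecomposition

open Matrix DoubleCoset

variable {ι K Γ₀ : Type*} [LinearOrder ι] [Field K]
  [LinearOrderedCommGroupWithZero Γ₀] {v : Valuation K Γ₀}

variable (v) in
/-- `M i k` is a nonzero entry of maximal valuation in its row and its column, strictly dominating
the entries below it and to its left: row and column `(i, k)` can then be cleared by elements of
the Iwahori subgroup. -/
structure IsPivot (M : Matrix ι ι K) (i k : ι) : Prop where
  ne_zero : M i k ≠ 0
  col_le : ∀ j, v (M j k) ≤ v (M i k)
  col_lt : ∀ j, i < j → v (M j k) < v (M i k)
  row_le : ∀ l, v (M i l) ≤ v (M i k)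
  row_lt : ∀ l, l < k → v (M i l) < v (M i k)

variable [Fintype ι]

theorem exists_isPivot {M : Matrix ι ι K} (hdet : M.det ≠ 0) (hM : isolatedColumns M ≠ Set.univ) :
    ∃ i k, k ∉ isolatedColumns M ∧ IsPivot v M i k := by
  obtain ⟨k₀, hk₀⟩ := (Set.ne_univ_iff_exists_notMem _).1 hM
  let key (p : ι × ι) : Γ₀ ×ₗ ι ×ₗ ιᵒᵈ :=
    toLex (v (M p.1 p.2), toLex (p.1, OrderDual.toDual p.2))
  obtain ⟨⟨i, k⟩, hk : k ∉ isolatedColumns M, hmax⟩ :=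
    Set.exists_max_image {p : ι × ι | p.2 ∉ isolatedColumns M} key (Set.toFinite _) ⟨(k₀, k₀), hk₀⟩
  have le (j l) (hl : l ∉ isolatedColumns M) : v (M j l) ≤ v (M i k) :=
    (Prod.Lex.le_iff.1 (hmax (j, l) hl)).elim le_of_lt fun h => h.1.le
  have lt (j l) (hl : l ∉ isolatedColumns M) (h : i < j ∨ i = j ∧ l < k) :
      v (M j l) < v (M i k) := by
    refine (Prod.Lex.le_iff.1 (hmax (j, l) hl)).resolve_right fun ⟨_, hlex⟩ => hlex.not_gt ?_
    exact Prod.Lex.lt_iff.2 h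
  have hne : M i k ≠ 0 := fun h0 => hdet <| det_eq_zero_of_column_eq_zero k fun j =>
    v.zero_iff.1 <| le_zero_iff.1 <| (le j k hk).trans_eq (by rw [h0, map_zero])
  have row_eq_zero (l) (hl : l ∈ isolatedColumns M) : M i l = 0 := by
    obtain ⟨r, hrl⟩ := hl
    exact hrl.col_eq_zero i (hrl.ne_and_ne_of_notMem hne hk).1
  have hpos : 0 < v (M i k) := zero_lt_iff.2 (v.ne_zero_iff.2 hne)
  refine ⟨i, k, hk, hne, fun j => le j k hk, fun j hj => lt j k hk (.inl hj),
    fun l => ?_, fun l hlk => ?_⟩ <;> by_cases hl : l ∈ isolatedColumns M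
  · simp [row_eq_zero l hl]
  · exact le i l hl
  · simpa [row_eq_zero l hl] using hpos
  · exact lt i l hl (.inr ⟨rfl, hlk⟩)

theorem exists_mem_iwahoriSubgroup_eq_one_add_vecMulVec {u w : ι → K} (h : w ⬝ᵥ u = 0)
    (hv : ∀ i j, v (u i * w j) ≤ 1 ∧ (j < i → v (u i * w j) < 1)) :
    ∃ d ∈ iwahoriSubgroup ι v, d.1 = 1 + vecMulVec u w := by
  refine ⟨⟨_, det_one_add_vecMulVec h⟩, mem_iwahoriSubgroup.2 fun i j => ⟨?_, fun hji => ?_⟩, rfl⟩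
  · refine v.map_add_le ?_ (hv i j).1
    rw [one_apply]
    split_ifs <;> simp
  · change v ((1 : Matrix ι ι K) i j + u i * w j) < 1
    rw [one_apply_ne hji.ne', zero_add]
    exact (hv i j).2 hji

theorem IsPivot.exists_eq_pivotReduction {g : SpecialLinearGroup ι K} {i k : ι}
    (h : IsPivot v g.1 i k) :
    ∃ d ∈ iwahoriSubgroup ι v, ∃ d' ∈ iwahoriSubgroup ι v,
      (d * g * d').1 = pivotReduction g.1 i k := by
  have hpos : 0 < v (g.1 i k) := zero_lt_iff.2 (v.ne_zero_iff.2 h.ne_zero)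
  obtain ⟨d, hd, hd_eq⟩ := exists_mem_iwahoriSubgroup_eq_one_add_vecMulVec (v := v)
    (u := eliminationVector g.1 i k) (w := Pi.single i 1) (by simp [eliminationVector])
    fun j l => by
      by_cases hl : l = i <;> by_cases hj : j = i <;>
        simp +contextual [hl, hj, eliminationVector, div_le_one₀ hpos, div_lt_one₀ hpos, h.col_le,
          h.col_lt]
  obtain ⟨d', hd', hd'_eq⟩ := exists_mem_iwahoriSubgroup_eq_one_add_vecMulVec (v := v)
    (u := Pi.single k 1) (w := eliminationVector g.1ᵀ k i) (by simp [eliminationVector])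
    fun j l => by
      by_cases hj : j = k <;> by_cases hl : l = k <;>
        simp +contextual [hl, hj, eliminationVector, div_le_one₀ hpos, div_lt_one₀ hpos, h.row_le,
          h.row_lt]
  refine ⟨d, hd, d', hd', ?_⟩
  rw [← eliminate_mul_mul_eliminate h.ne_zero, ← hd_eq, ← hd'_eq]
  rfl

variable (v) in
theorem exists_monomialMatrix_mem_doubleCoset (g : SpecialLinearGroup ι K) :
    ∃ m ∈ doubleCoset g (iwahoriSubgroup ι v : Set (SpecialLinearGroup ι K)) (iwahoriSubgroup ι v),
      ∃ (σ : Equiv.Perm ι) (w : ι → K), (∀ k, w k ≠ 0) ∧ m.1 = monomialMatrix σ w := by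
  obtain ⟨m, hm, hmax⟩ := Set.Finite.exists_maximalFor' (fun m => isolatedColumns m.1)
    (doubleCoset g (iwahoriSubgroup ι v : Set (SpecialLinearGroup ι K)) (iwahoriSubgroup ι v))
    (Set.toFinite _) ⟨g, mem_doubleCoset_self _ _ g⟩
  refine ⟨m, hm, exists_eq_monomialMatrix_of_isolatedColumns_eq_univ ?_⟩
  by_contra hne
  obtain ⟨i, k, hk, hpivot⟩ := exists_isPivot (v := v) m.det_ne_zero hne
  obtain ⟨d, hd, d', hd', hreduction⟩ := hpivot.exists_eq_pivotReduction
  have hmem : d * m * d' ∈ doubleCoset g (iwahoriSubgroup ι v) (iwahoriSubgroup ι v) :=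
    doubleCoset_eq_of_mem hm ▸ mem_doubleCoset.2 ⟨d, hd, d', hd', rfl⟩
  have hlt : isolatedColumns m.1 ⊂ isolatedColumns (d * m * d').1 :=
    hreduction ▸ isolatedColumns_ssubset_pivotReduction hpivot.ne_zero hk
  exact hlt.not_subset (hmax hmem hlt.subset)

end BruhatDecomposition

section RankTwoValuation

open HahnSeries

variable (F : Type) [Field F]

/-- The rank two valuation of `K = F((t1))((t2))`, written multiplicatively. It is the one for which
`Dzero` is an Iwahori subgroup. -/
def rankTwoValuation : Valuation (Ktwo F) (Multiplicative (WithTop (ℤ ×ₗ ℤ))ᵒᵈ) :=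
  AddValuation.toValuation (iteratedAddVal ℤ ℤ F)

variable {F}

theorem rankTwoValuation_le_one_iff {x : Ktwo F} :
    rankTwoValuation F x ≤ 1 ↔ IsInt2 F x ∧ IsInt1 F (x.coeff 0) :=
  toLex_le_orderTop_ofIterate (b := 0) (a := 0)

theorem rankTwoValuation_lt_one_iff {x : Ktwo F} :
    rankTwoValuation F x < 1 ↔ IsInt2 F x ∧ ∀ l ≤ 0, (x.coeff 0).coeff l = 0 :=
  toLex_lt_orderTop_ofIterate (b := 0) (a := 0)

theorem Dzero_eq_iwahoriSubgroup (n : ℕ) :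
    Dzero F n = iwahoriSubgroup (Fin n) (rankTwoValuation F) := by
  ext g
  refine (forall₂_congr fun i j => ?_).trans mem_iwahoriSubgroup.symm
  rw [rankTwoValuation_le_one_iff, rankTwoValuation_lt_one_iff, and_assoc]
  refine and_congr_right fun hint2 => and_congr_right fun hint1 => imp_congr_right fun _ => ?_
  exact ⟨fun h0 => ⟨hint2, fun l hl => hl.lt_or_eq.elim (hint1 l) fun h => h ▸ h0⟩,
    fun h => h.2 0 le_rfl⟩

variable (F)

theorem tone_ne_zero : tone F ≠ 0 := by simp [tone]

theorem ttwo_ne_zero : ttwo F ≠ 0 := by simp [ttwo]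

theorem tone_zpow_mul_ttwo_zpow (a b : ℤ) :
    tone F ^ a * ttwo F ^ b = single b (single a 1) := by
  have htone : tone F ^ a = C (single a (1 : F)) := by
    rw [RatFunc.single_zpow, map_zpow₀]
    rfl
  rw [htone, ttwo, ← RatFunc.single_zpow, C_apply, single_mul_single, zero_add, mul_one]

theorem tone_zpow_mul_ttwo_zpow_ne_zero (a b : ℤ) : tone F ^ a * ttwo F ^ b ≠ 0 :=
  mul_ne_zero (zpow_ne_zero _ (tone_ne_zero F)) (zpow_ne_zero _ (ttwo_ne_zero F))

variable {F}

theorem rankTwoValuation_eq_iff {x : Ktwo F} (hx : x ≠ 0) {a b : ℤ} :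
    rankTwoValuation F x = rankTwoValuation F (tone F ^ a * ttwo F ^ b) ↔
      x.leadingCoeff.order = a ∧ x.order = b := by
  have eq_iff (y : Ktwo F) : rankTwoValuation F x = rankTwoValuation F y ↔
      (ofIterate x).orderTop = (ofIterate y).orderTop := Iff.rfl
  rw [eq_iff, orderTop_ofIterate hx, orderTop_ofIterate (tone_zpow_mul_ttwo_zpow_ne_zero F a b),
    tone_zpow_mul_ttwo_zpow, leadingCoeff_of_single, order_single (by simp),
    order_single one_ne_zero, WithTop.coe_inj, toLex_inj, Prod.mk.injEq, and_comm]

theorem exists_rankTwoValuation_eq {x : Ktwo F} (hx : x ≠ 0) :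
    ∃ a b : ℤ, rankTwoValuation F x = rankTwoValuation F (tone F ^ a * ttwo F ^ b) :=
  ⟨_, _, (rankTwoValuation_eq_iff hx).2 ⟨rfl, rfl⟩⟩

theorem rankTwoValuation_tone_zpow_mul_ttwo_zpow_inj {a b a' b' : ℤ} :
    rankTwoValuation F (tone F ^ a * ttwo F ^ b) =
      rankTwoValuation F (tone F ^ a' * ttwo F ^ b') ↔ a = a' ∧ b = b' := by
  rw [rankTwoValuation_eq_iff (tone_zpow_mul_ttwo_zpow_ne_zero F a b), tone_zpow_mul_ttwo_zpow,
    leadingCoeff_of_single, order_single one_ne_zero, order_single (by simp)]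

end RankTwoValuation

section Liftings

theorem prod_zpow_eq_zpow_sum {ι G₀ : Type*} [CommGroupWithZero G₀] {x : G₀} (hx : x ≠ 0)
    (s : Finset ι) (f : ι → ℤ) : ∏ i ∈ s, x ^ f i = x ^ ∑ i ∈ s, f i := by
  classical
  induction s using Finset.induction_on with
  | empty => simp
  | insert i s hi ih => rw [Finset.prod_insert hi, Finset.sum_insert hi, zpow_add₀ hx, ih]

variable {F : Type} [Field F] {ι : Type*} [Fintype ι] {n : ℕ}

theorem prod_tone_zpow_mul_ttwo_zpow (a b : ι → ℤ) :
    ∏ k, tone F ^ a k * ttwo F ^ b k = tone F ^ (∑ k, a k) * ttwo F ^ (∑ k, b k) := by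
  rw [Finset.prod_mul_distrib, prod_zpow_eq_zpow_sum (tone_ne_zero F),
    prod_zpow_eq_zpow_sum (ttwo_ne_zero F)]

theorem sum_eq_zero_of_eq_monomialMatrix [DecidableEq ι]
    {m : Matrix.SpecialLinearGroup ι (Ktwo F)} {σ : Equiv.Perm ι} {w : ι → Ktwo F}
    (hm : m.1 = monomialMatrix σ w) {a b : ι → ℤ}
    (hw : ∀ k, rankTwoValuation F (w k) = rankTwoValuation F (tone F ^ a k * ttwo F ^ b k)) :
    ∑ k, a k = 0 ∧ ∑ k, b k = 0 := by
  have hsign : rankTwoValuation F (Equiv.Perm.sign σ : ℤ) = 1 := by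
    obtain h | h := Int.units_eq_one_or (Equiv.Perm.sign σ) <;> simp [h]
  have hdet : (Equiv.Perm.sign σ : ℤ) * ∏ k, w k = (1 : Ktwo F) := by
    rw [← det_monomialMatrix, ← hm, m.2]
  rw [← rankTwoValuation_tone_zpow_mul_ttwo_zpow_inj (F := F), ← prod_tone_zpow_mul_ttwo_zpow,
    map_prod, ← Finset.prod_congr rfl fun k _ => hw k, ← map_prod]
  simpa [hsign] using congrArg (rankTwoValuation F) hdet

theorem IsLifting.exists_eq_monomialMatrix {σ : Equiv.Perm (Fin n)} {a b : Fin n → ℤ}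
    {m : Matrix.SpecialLinearGroup (Fin n) (Ktwo F)} (hm : IsLifting F n σ a b m) :
    ∃ w : Fin n → Ktwo F, (∀ k, w k ≠ 0) ∧
      (∀ k, rankTwoValuation F (w k) = rankTwoValuation F (tone F ^ a k * ttwo F ^ b k)) ∧
      m.1 = monomialMatrix σ w := by
  obtain ⟨ε, hε, hm⟩ := hm
  refine ⟨fun k => ε k * tone F ^ a k * ttwo F ^ b k, fun k => ?_, fun k => ?_, Matrix.ext hm⟩
  all_goals obtain h | h := hε k <;> simp [h, zpow_ne_zero, tone_ne_zero, ttwo_ne_zero]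

variable (F) in
theorem exists_isLifting (σ : Equiv.Perm (Fin n)) {a b : Fin n → ℤ} (ha : ∑ k, a k = 0)
    (hb : ∑ k, b k = 0) : ∃ m, IsLifting F n σ a b m := by
  obtain ⟨ε, hε⟩ : ∃ ε : Fin n → ℤˣ, ∏ k, ε k = Equiv.Perm.sign σ :=
    ⟨_, σ.sign_eq_prod_prod_Iio.symm⟩
  let w (k : Fin n) : Ktwo F := (ε k : ℤ) * tone F ^ a k * ttwo F ^ b k
  have hprod : ∏ k, w k = (Equiv.Perm.sign σ : ℤ) := by
    simp only [w, mul_assoc]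
    rw [Finset.prod_mul_distrib, prod_tone_zpow_mul_ttwo_zpow, ha, hb, ← hε]
    simp
  have hdet : (monomialMatrix σ w).det = 1 := by
    rw [det_monomialMatrix, hprod, ← Int.cast_mul, Int.units_coe_mul_self, Int.cast_one]
  refine ⟨⟨_, hdet⟩, fun k => (ε k : ℤ), fun k => ?_, fun i k => rfl⟩
  obtain h | h := Int.units_eq_one_or (ε k) <;> simp [h]

end Liftings

open DoubleCoset in
theorem double_iwahori_coset_decomposition_general (F : Type) [Field F] (n : ℕ) :
    (∀ g : Matrix.SpecialLinearGroup (Fin n) (Ktwo F),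
      ∃ (σ : Equiv.Perm (Fin n)) (a b : Fin n → ℤ),
        (∑ k, a k) = 0 ∧ (∑ k, b k) = 0 ∧
        ∃ m, IsLifting F n σ a b m ∧
          ∃ d ∈ Dzero F n, ∃ d' ∈ Dzero F n, g = d * m * d') ∧
    (∀ (σ σ' : Equiv.Perm (Fin n)) (a b a' b' : Fin n → ℤ),
      ∀ m m', IsLifting F n σ a b m → IsLifting F n σ' a' b' m' →
        (∃ g, (∃ d ∈ Dzero F n, ∃ d' ∈ Dzero F n, g = d * m * d') ∧
              (∃ d ∈ Dzero F n, ∃ d' ∈ Dzero F n, g = d * m' * d')) →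
        σ = σ' ∧ a = a' ∧ b = b') := by
  simp only [Dzero_eq_iwahoriSubgroup, ← mem_doubleCoset, ← Set.not_disjoint_iff]
  refine ⟨fun g => ?_, fun σ σ' a b a' b' m m' hm hm' hmeet => ?_⟩
  · obtain ⟨p, hp, σ, w, hw, hpw⟩ := exists_monomialMatrix_mem_doubleCoset (rankTwoValuation F) g
    choose a b hab using fun k => exists_rankTwoValuation_eq (hw k)
    obtain ⟨ha, hb⟩ := sum_eq_zero_of_eq_monomialMatrix hpw hab
    obtain ⟨m, hm⟩ := exists_isLifting F σ ha hb
    obtain ⟨w', -, hw', hmw'⟩ := hm.exists_eq_monomialMatrix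
    have hmem := (mem_doubleCoset_monomialMatrix_iff hpw hmw' hw).2
      ⟨rfl, fun k => (hab k).trans (hw' k).symm⟩
    refine ⟨σ, a, b, ha, hb, m, hm, ?_⟩
    rw [doubleCoset_eq_of_mem hmem, doubleCoset_eq_of_mem hp]
    exact mem_doubleCoset_self _ _ g
  · obtain ⟨w, hne, hw, hmw⟩ := hm.exists_eq_monomialMatrix
    obtain ⟨w', -, hw', hmw'⟩ := hm'.exists_eq_monomialMatrix
    obtain ⟨hσ, hval⟩ := (mem_doubleCoset_monomialMatrix_iff hmw hmw' hne).1
      (mem_doubleCoset_of_not_disjoint hmeet)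
    have hab (k) : a k = a' k ∧ b k = b' k := rankTwoValuation_tone_zpow_mul_ttwo_zpow_inj.1 <|
      (hw k).symm.trans ((hval k).trans (hw' k))
    exact ⟨hσ, funext fun k => (hab k).1, funext fun k => (hab k).2⟩

theorem double_iwahori_coset_decomposition (F : Type) [Field F] [Fintype F]
    (n : ℕ) (hn : 2 ≤ n) :
    (∀ g : Matrix.SpecialLinearGroup (Fin n) (Ktwo F),
      ∃ (σ : Equiv.Perm (Fin n)) (a b : Fin n → ℤ),
        (∑ k, a k) = 0 ∧ (∑ k, b k) = 0 ∧
        ∃ m, IsLifting F n σ a b m ∧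
          ∃ d ∈ Dzero F n, ∃ d' ∈ Dzero F n, g = d * m * d') ∧
    (∀ (σ σ' : Equiv.Perm (Fin n)) (a b a' b' : Fin n → ℤ),
      (∑ k, a k) = 0 → (∑ k, b k) = 0 → (∑ k, a' k) = 0 → (∑ k, b' k) = 0 →
      ∀ m m', IsLifting F n σ a b m → IsLifting F n σ' a' b' m' →
        (∃ g, (∃ d ∈ Dzero F n, ∃ d' ∈ Dzero F n, g = d * m * d') ∧
              (∃ d ∈ Dzero F n, ∃ d' ∈ Dzero F n, g = d * m' * d')) →
        σ = σ' ∧ a = a' ∧ b = b') :=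
  ⟨(double_iwahori_coset_decomposition_general F n).1, fun σ σ' a b a' b' _ _ _ _ =>
    (double_iwahori_coset_decomposition_general F n).2 σ σ' a b a' b'⟩
end
end

section
/- There exists a central extension 1 → ℤ → E → A → 1 whose commutator pairing equals β, i.e. for all x, y ∈ A and any lifts x̃, ỹ ∈ E of x, y, the commutator x̃·ỹ·x̃^{-1}·ỹ^{-1} is the image of β(x,y) ∈ ℤ under the central inclusion. Moreover this extension is unique up to equivalence: any two central extensions of A by ℤ with the same commutator pairing β are equivalent as extensions. -/
/-!
For a finitely generated free abelian group `A` and an alternating `ℤ`-bilinear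
form `β : A × A → ℤ`, there exists a central extension `1 → ℤ → E → A → 1`
whose commutator pairing is `β`, and it is unique up to equivalence of
extensions.
-/

/-- The data of an extension of the abelian group `A` by `ℤ`: a group `E`
together with homomorphisms `ℤ → E → A`. -/
structure ExtOfByInt (A : Type) [AddCommGroup A] where
  /-- The middle group of the extension. -/
  E : Type
  /-- The group structure on the middle group. -/
  [grp : Group E]
  /-- The inclusion of the kernel `ℤ`. -/
  ι : Multiplicative ℤ →* E
  /-- The projection onto `A`. -/
  π : E →* Multiplicative A

attribute [instance] ExtOfByInt.grp

/-- `X` is a central extension `1 → ℤ → E → A → 1` whose commutator pairing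
(the commutator of lifts, which only depends on the images in `A`) is given by
the bilinear form `β`. -/
def ExtOfByInt.IsCentralWithPairing {A : Type} [AddCommGroup A]
    (β : A →+ A →+ ℤ) (X : ExtOfByInt A) : Prop :=
  Function.Injective X.ι ∧ Function.Surjective X.π ∧
  (∀ z : Multiplicative ℤ, X.ι z ∈ Subgroup.center X.E) ∧
  X.ι.range = X.π.ker ∧
  ∀ x y : X.E, x * y * x⁻¹ * y⁻¹ =
    X.ι (Multiplicative.ofAdd (β (X.π x).toAdd (X.π y).toAdd))

/-!
A bilinear form `b` on `A` twists a central extension of `A` into another one, with the same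
underlying set and the product `x * y * b(x, y)`; this multiplies the commutator pairing by
`b(x, y) / b(y, x)`. When `A` is free, an alternating form `β` has the shape `b(x, y) - b(y, x)`: take
for `b` one triangular half of the matrix of `β` in an ordered basis. So twisting the trivial
extension by `b` realises `β`. Conversely, twisting an extension with pairing `β` by the inverse of
`b` makes it abelian, hence split because `A` is free, hence trivial; and two extensions are
equivalent as soon as their twists are.
-/

namespace CentralExtension

open scoped commutatorElement

theorem exists_sub_flip_eq_of_isAlt {R M P : Type*} [CommRing R] [AddCommGroup M] [Module R M]
    [AddCommGroup P] [Module R P] [Module.Free R M] {B : M →ₗ[R] M →ₗ[R] P} (hB : B.IsAlt) :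
    ∃ b : M →ₗ[R] M →ₗ[R] P, b - b.flip = B := by
  let e := Module.Free.chooseBasis R M
  classical
  let : LinearOrder (Module.Free.ChooseBasisIndex R M) := linearOrderOfSTO WellOrderingRel
  let b := e.constr R fun i ↦ e.constr R fun j ↦ if j < i then B (e i) (e j) else 0
  have hb (i j) : b (e i) (e j) = if j < i then B (e i) (e j) else 0 := by
    simp only [b, Module.Basis.constr_basis]
  refine ⟨b, LinearMap.ext_basis e e fun i j ↦ ?_⟩
  rw [LinearMap.sub_apply, LinearMap.sub_apply, LinearMap.flip_apply, hb, hb]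
  rcases lt_trichotomy i j with hij | rfl | hji
  · simp [hij, hij.not_gt, hB.neg]
  · simp [hB.self_eq_zero]
  · simp [hji, hji.not_gt]

section Pairing

variable {A C : Type*} [AddCommGroup A] [AddCommGroup C]

/-- A biadditive map written multiplicatively, so that it can be evaluated on the quotient of a
`GroupExtension` and take values in its kernel. -/
def toMultiplicative₂ (β : A →+ A →+ C) :
    Multiplicative A →* Multiplicative A →* Multiplicative C :=
  MonoidHom.mk' (fun x ↦ (β x.toAdd).toMultiplicative) fun x y ↦ by ext; simp

theorem exists_div_flip_eq_toMultiplicative₂ [Module.Free ℤ A] (β : A →+ A →+ C)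
    (hβ : ∀ x, β x x = 0) :
    ∃ b : Multiplicative A →* Multiplicative A →* Multiplicative C,
      b / b.flip = toMultiplicative₂ β := by
  let B : A →ₗ[ℤ] A →ₗ[ℤ] C :=
    LinearMap.mk₂ ℤ (fun x y ↦ β x y) (by simp) (by simp) (by simp) (by simp)
  obtain ⟨b, hb⟩ := exists_sub_flip_eq_of_isAlt (B := B) hβ
  refine ⟨toMultiplicative₂ (LinearMap.toAddMonoidHom'.comp b.toAddMonoidHom), ?_⟩
  exact MonoidHom.ext_iff₂.2 fun x y ↦ congrArg Multiplicative.ofAdd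
    (LinearMap.congr_fun₂ hb x.toAdd y.toAdd)

end Pairing

section HasCommutatorPairing

variable {N E G : Type*} [CommGroup N] [Group E] [Group G] {S : GroupExtension N E G}

/-- The commutator pairing of `S` is the bimultiplicative map `β`. Such an `S` is automatically a
central extension, see `HasCommutatorPairing.inl_mem_center`. -/
def HasCommutatorPairing (S : GroupExtension N E G) (β : G →* G →* N) : Prop :=
  ∀ x y : E, ⁅x, y⁆ = S.inl (β (S.rightHom x) (S.rightHom y))

theorem hasCommutatorPairing_iff_mul_eq {β : G →* G →* N} :
    HasCommutatorPairing S β ↔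
      ∀ x y, x * y = S.inl (β (S.rightHom x) (S.rightHom y)) * y * x := by
  simp only [HasCommutatorPairing, commutatorElement_def, mul_inv_eq_iff_eq_mul]

theorem hasCommutatorPairing_one_iff : HasCommutatorPairing S 1 ↔ IsMulCommutative E := by
  simp [hasCommutatorPairing_iff_mul_eq, isMulCommutative_iff]

theorem HasCommutatorPairing.inl_mem_center {β : G →* G →* N} (h : HasCommutatorPairing S β)
    (n : N) : S.inl n ∈ Subgroup.center E :=
  Subgroup.mem_center_iff.2 fun x ↦ by
    simpa using hasCommutatorPairing_iff_mul_eq.1 h x (S.inl n)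

end HasCommutatorPairing

theorem inl_mul_comm {N E G : Type*} [Group N] [Group E] [Group G] {S : GroupExtension N E G}
    (hS : ∀ n, S.inl n ∈ Subgroup.center E) (n : N) (x : E) : S.inl n * x = x * S.inl n :=
  (Subgroup.mem_center_iff.1 (hS n) x).symm

section Twist

variable {N E E' G : Type*} [CommGroup N] [Group E] [Group E'] [Group G]
  {S : GroupExtension N E G} {T : GroupExtension N E' G}

/-- The twist of a central extension `S` by a bimultiplicative map `b`: the middle group of `S` with
the new product `x * y * b(x, y)`, where `b` is evaluated on the images of `x` and `y`. It is a
structure rather than a type synonym so that the two products cannot be confused. -/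
@[ext]
structure Twist (hS : ∀ n, S.inl n ∈ Subgroup.center E) (b : G →* G →* N) where
  /-- The underlying element of the original extension. -/
  val : E

namespace Twist

variable {hS : ∀ n, S.inl n ∈ Subgroup.center E} {hT : ∀ n, T.inl n ∈ Subgroup.center E'}
  {b : G →* G →* N}

instance : Mul (Twist hS b) :=
  ⟨fun x y ↦ ⟨x.val * y.val * S.inl (b (S.rightHom x.val) (S.rightHom y.val))⟩⟩

instance : One (Twist hS b) := ⟨⟨1⟩⟩

instance : Inv (Twist hS b) :=
  ⟨fun x ↦ ⟨x.val⁻¹ * S.inl (b (S.rightHom x.val) (S.rightHom x.val))⟩⟩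

@[simp]
theorem val_mul (x y : Twist hS b) :
    (x * y).val = x.val * y.val * S.inl (b (S.rightHom x.val) (S.rightHom y.val)) := rfl

@[simp]
theorem val_one : (1 : Twist hS b).val = 1 := rfl

@[simp]
theorem val_inv (x : Twist hS b) :
    x⁻¹.val = x.val⁻¹ * S.inl (b (S.rightHom x.val) (S.rightHom x.val)) := rfl

instance : Group (Twist hS b) :=
  Group.ofLeftAxioms
    (fun x y z ↦ by
      ext
      simp only [val_mul, map_mul b, map_mul S.rightHom, MonoidHom.mul_apply, S.rightHom_inl,
        map_mul (b _), mul_one]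
      calc
        _ = x.val * y.val * z.val * S.inl (b (S.rightHom x.val) (S.rightHom y.val) *
              (b (S.rightHom x.val) (S.rightHom z.val) *
                b (S.rightHom y.val) (S.rightHom z.val))) := by
          rw [mul_assoc (x.val * y.val), inl_mul_comm hS]
          simp only [map_mul S.inl, mul_assoc]
        _ = _ := by
          rw [← mul_assoc (b _ _), mul_comm _ (b (S.rightHom y.val) _), map_mul S.inl]
          simp only [mul_assoc])
    (fun x ↦ by ext; simp)
    (fun x ↦ by ext; simp [mul_assoc, inl_mul_comm hS _ x.val])

/-- The twist as an extension, with the same inclusion and projection as `S`. -/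
def toGroupExtension (hS : ∀ n, S.inl n ∈ Subgroup.center E) (b : G →* G →* N) :
    GroupExtension N (Twist hS b) G where
  inl := MonoidHom.mk' (fun n ↦ ⟨S.inl n⟩) fun m n ↦ by ext; simp
  rightHom := MonoidHom.mk' (fun x ↦ S.rightHom x.val) fun x y ↦ by simp
  inl_injective _ _ h := S.inl_injective (congrArg val h)
  range_inl_eq_ker_rightHom := by
    ext x
    simpa [Twist.ext_iff] using SetLike.ext_iff.1 S.range_inl_eq_ker_rightHom x.val
  rightHom_surjective g := (S.rightHom_surjective g).imp' mk fun _ h ↦ h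

@[simp]
theorem val_inl (n : N) : ((toGroupExtension hS b).inl n).val = S.inl n := rfl

@[simp]
theorem rightHom_apply (x : Twist hS b) :
    (toGroupExtension hS b).rightHom x = S.rightHom x.val := rfl

theorem hasCommutatorPairing {β : G →* G →* N} (h : HasCommutatorPairing S β) :
    HasCommutatorPairing (toGroupExtension hS b) (β * (b / b.flip)) := by
  rw [hasCommutatorPairing_iff_mul_eq] at h ⊢
  intro x y
  ext
  simp only [val_mul, val_inl, rightHom_apply, MonoidHom.mul_apply, MonoidHom.div_apply,
    MonoidHom.flip_apply, map_mul S.rightHom, S.rightHom_inl, one_mul, map_one,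
    MonoidHom.one_apply, mul_one]
  calc
    _ = S.inl (β (S.rightHom x.val) (S.rightHom y.val)) * (y.val * x.val) *
          (S.inl (b (S.rightHom x.val) (S.rightHom y.val) /
              b (S.rightHom y.val) (S.rightHom x.val)) *
            S.inl (b (S.rightHom y.val) (S.rightHom x.val))) := by
      rw [h x.val y.val, ← map_mul S.inl (_ / _), div_mul_cancel, mul_assoc _ y.val]
    _ = _ := by
      rw [← mul_assoc, mul_assoc _ (_ * _), ← inl_mul_comm hS (_ / _) (_ * _)]
      simp only [map_mul S.inl, mul_assoc]

theorem mk_mul (x y : E) :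
    (⟨x * y⟩ : Twist hS b) =
      ⟨x⟩ * ⟨y⟩ * (toGroupExtension hS b).inl (b (S.rightHom x) (S.rightHom y))⁻¹ := by
  ext
  simp

/-- Equivalent twists come from equivalent extensions, through the same map of underlying sets. -/
noncomputable def equivOfEquiv
    (e : (toGroupExtension hS b).Equiv (toGroupExtension hT b)) : S.Equiv T :=
  have rightHom_val (x : E) : T.rightHom (e ⟨x⟩).val = S.rightHom x := e.rightHom_map ⟨x⟩
  GroupExtension.Equiv.ofMonoidHom
    (MonoidHom.mk' (fun x ↦ (e ⟨x⟩).val) fun x y ↦ by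
      rw [mk_mul, map_mul, map_mul, e.map_inl]
      simp [rightHom_val])
    (MonoidHom.ext fun n ↦ congrArg val (e.map_inl n))
    (MonoidHom.ext rightHom_val)

end Twist

end Twist

section Splitting

variable {N E G : Type*} [Group N] [Group E]

theorem nonempty_splitting_of_free {A : Type*} [AddCommGroup A] [Module.Free ℤ A]
    [IsMulCommutative E] (S : GroupExtension N E (Multiplicative A)) : Nonempty S.Splitting := by
  open scoped IsMulCommutative in
  let π : Additive E →ₗ[ℤ] A := (MonoidHom.toAdditiveLeft S.rightHom).toIntLinearMap
  obtain ⟨s, hs⟩ := Module.projective_lifting_property π LinearMap.id S.rightHom_surjective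
  exact ⟨⟨AddMonoidHom.toMultiplicativeLeft s.toAddMonoidHom, fun a ↦
    LinearMap.congr_fun hs a.toAdd⟩⟩

variable [Group G]

theorem conjAct_eq_one {S : GroupExtension N E G} (hS : ∀ n, S.inl n ∈ Subgroup.center E) :
    S.conjAct = 1 := by
  ext x n
  apply S.inl_injective
  rw [S.inl_conjAct_comm, ← inl_mul_comm hS, mul_inv_cancel_right]
  rfl

variable (N G) in
/-- The trivial extension `N × G` of `G` by `N`, encoded as the semidirect product for the trivial
action so that `GroupExtension.Splitting.semidirectProductToGroupExtensionEquiv` applies to it. -/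
abbrev trivialExtension : GroupExtension N (N ⋊[(1 : G →* MulAut N)] G) G :=
  SemidirectProduct.toGroupExtension 1

theorem nonempty_trivialExtension_equiv_of_splitting {S : GroupExtension N E G}
    (hS : ∀ n, S.inl n ∈ Subgroup.center E) (s : S.Splitting) :
    Nonempty ((trivialExtension N G).Equiv S) := by
  have hs : s.conjAct = 1 := by
    rw [GroupExtension.Splitting.conjAct, conjAct_eq_one hS, MonoidHom.one_comp]
  rw [trivialExtension, ← hs]
  exact ⟨s.semidirectProductToGroupExtensionEquiv⟩

theorem hasCommutatorPairing_trivialExtension {N G : Type*} [CommGroup N] [CommGroup G] :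
    HasCommutatorPairing (trivialExtension N G) 1 :=
  hasCommutatorPairing_one_iff.2 ⟨⟨fun x y ↦ by ext <;> simp [mul_comm]⟩⟩

end Splitting

section Classification

variable {A C : Type*} [AddCommGroup A] [AddCommGroup C] [Module.Free ℤ A]

theorem HasCommutatorPairing.nonempty_trivialExtension_equiv {E : Type*} [Group E]
    {S : GroupExtension (Multiplicative C) E (Multiplicative A)} (h : HasCommutatorPairing S 1) :
    Nonempty ((trivialExtension (Multiplicative C) (Multiplicative A)).Equiv S) := by
  have := hasCommutatorPairing_one_iff.1 h
  obtain ⟨s⟩ := nonempty_splitting_of_free S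
  exact nonempty_trivialExtension_equiv_of_splitting h.inl_mem_center s

theorem HasCommutatorPairing.nonempty_equiv {E E' : Type*} [Group E] [Group E']
    {S : GroupExtension (Multiplicative C) E (Multiplicative A)}
    {T : GroupExtension (Multiplicative C) E' (Multiplicative A)}
    {b : Multiplicative A →* Multiplicative A →* Multiplicative C}
    (hS : HasCommutatorPairing S (b / b.flip)) (hT : HasCommutatorPairing T (b / b.flip)) :
    Nonempty (S.Equiv T) := by
  have hb : b / b.flip * (b⁻¹ / b⁻¹.flip) = 1 := by
    ext; simp
  have hS' := Twist.hasCommutatorPairing (hS := hS.inl_mem_center) (b := b⁻¹) hS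
  have hT' := Twist.hasCommutatorPairing (hS := hT.inl_mem_center) (b := b⁻¹) hT
  rw [hb] at hS' hT'
  obtain ⟨e⟩ := hS'.nonempty_trivialExtension_equiv
  obtain ⟨f⟩ := hT'.nonempty_trivialExtension_equiv
  exact ⟨Twist.equivOfEquiv (e.symm.trans f)⟩

end Classification

end CentralExtension

open CentralExtension in
theorem central_extension_exists_unique_general.{u, v, w, w'} {A : Type u} {C : Type v}
    [AddCommGroup A] [Module.Free ℤ A] [AddCommGroup C] (β : A →+ A →+ C)
    (halt : ∀ x : A, β x x = 0) :
    (∃ (E : Type (max u v)) (_ : Group E)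
      (S : GroupExtension (Multiplicative C) E (Multiplicative A)),
      HasCommutatorPairing S (toMultiplicative₂ β)) ∧
    ∀ (E : Type w) (E' : Type w') [Group E] [Group E']
      (S : GroupExtension (Multiplicative C) E (Multiplicative A))
      (T : GroupExtension (Multiplicative C) E' (Multiplicative A)),
      HasCommutatorPairing S (toMultiplicative₂ β) →
      HasCommutatorPairing T (toMultiplicative₂ β) → Nonempty (S.Equiv T) := by
  obtain ⟨b, hb⟩ := exists_div_flip_eq_toMultiplicative₂ β halt
  rw [← hb]
  constructor
  · have h := hasCommutatorPairing_trivialExtension (N := Multiplicative C) (G := Multiplicative A)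
    exact ⟨_, _, Twist.toGroupExtension h.inl_mem_center b,
      one_mul (b / b.flip) ▸ Twist.hasCommutatorPairing h⟩
  · intro E E' _ _ S T hS hT
    exact hS.nonempty_equiv hT

namespace ExtOfByInt

open CentralExtension

variable {A : Type} [AddCommGroup A] {β : A →+ A →+ ℤ}

theorem isCentralWithPairing_of_hasCommutatorPairing {E : Type} [Group E]
    {S : GroupExtension (Multiplicative ℤ) E (Multiplicative A)}
    (h : HasCommutatorPairing S (toMultiplicative₂ β)) :
    (ExtOfByInt.mk E S.inl S.rightHom).IsCentralWithPairing β :=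
  ⟨S.inl_injective, S.rightHom_surjective, h.inl_mem_center, S.range_inl_eq_ker_rightHom, h⟩

namespace IsCentralWithPairing

/-- The short exact sequence underlying a central extension in the sense of
`ExtOfByInt.IsCentralWithPairing`. -/
def toGroupExtension {X : ExtOfByInt A} (hX : X.IsCentralWithPairing β) :
    GroupExtension (Multiplicative ℤ) X.E (Multiplicative A) :=
  ⟨X.ι, X.π, hX.1, hX.2.2.2.1, hX.2.1⟩

theorem hasCommutatorPairing {X : ExtOfByInt A} (hX : X.IsCentralWithPairing β) :
    HasCommutatorPairing hX.toGroupExtension (toMultiplicative₂ β) :=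
  hX.2.2.2.2

end IsCentralWithPairing

end ExtOfByInt

theorem central_extension_exists_unique (A : Type) [AddCommGroup A]
    [Module.Free ℤ A] [Module.Finite ℤ A]
    (β : A →+ A →+ ℤ) (halt : ∀ x : A, β x x = 0) :
    (∃ X : ExtOfByInt A, X.IsCentralWithPairing β) ∧
    (∀ X Y : ExtOfByInt A, X.IsCentralWithPairing β → Y.IsCentralWithPairing β →
      ∃ e : X.E ≃* Y.E, (∀ z : Multiplicative ℤ, e (X.ι z) = Y.ι z) ∧
        (∀ x : X.E, Y.π (e x) = X.π x)) := by
  obtain ⟨⟨E, _, S, hS⟩, hunique⟩ := central_extension_exists_unique_general β halt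
  exact ⟨⟨_, ExtOfByInt.isCentralWithPairing_of_hasCommutatorPairing hS⟩, fun X Y hX hY ↦
    (hunique X.E Y.E _ _ hX.hasCommutatorPairing hY.hasCommutatorPairing).elim
      fun e ↦ ⟨e.toMulEquiv, e.map_inl, e.rightHom_map⟩⟩
end

section
/- Every g ∈ SL_n(F((t))) can be written as g = b·k where b ∈ SL_n(F((t))) is upper triangular and k ∈ SL_n(F[[t]]); that is, SL_n(F((t))) = B(F((t)))·SL_n(F[[t]]) (Iwasawa decomposition). -/
/-!
Iwasawa decomposition: `SL_n(F((t))) = B(F((t))) · SL_n(F[[t]])`, i.e. every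
`g ∈ SL_n(F((t)))` can be written `g = b · k` with `b` upper triangular and `k`
a matrix all of whose entries lie in `F[[t]]`.
-/

noncomputable section

/-- `f ∈ F[[t]]`, i.e. the Laurent series `f` has no negative coefficients. -/
def LaurentIsIntegral (F : Type) [Field F] (f : LaurentSeries F) : Prop :=
  ∀ m : ℤ, m < 0 → f.coeff m = 0

/-!
Right multiplication by `SL_n(R)` performs column operations. For `R` a Bézout domain with fraction
ring `K`, two entries `x, y : K` satisfy `x q = y p` with `p, q : R` coprime, and a matrix of
`SL_2(R)` with second column `(q, -p)` sends the row `(x, y)` to `(*, 0)`. Rows are cleared from the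
bottom up: to clear row `a` one only mixes the columns `≤ a`, in which all lower rows already
vanish, so these rows stay unchanged.
-/

section

open Matrix MatrixGroups

section ExtendSL

variable {m n R S : Type*} [DecidableEq n] [CommRing R] [CommRing S]

variable (R) in
/-- The matrix of the coordinate inclusion `Rᵐ → Rⁿ` along `e`: its `j`-th column is the standard
basis vector at `e j`. -/
def inclusionMatrix (e : m → n) : Matrix n m R :=
  (1 : Matrix n n R).submatrix id e

lemma map_inclusionMatrix (f : R →+* S) (e : m → n) :
    (inclusionMatrix R e).map f = inclusionMatrix S e := by
  rw [inclusionMatrix, ← submatrix_map, Matrix.map_one f f.map_zero f.map_one, inclusionMatrix]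

variable [Fintype n]

lemma vecMul_inclusionMatrix (e : m → n) (v : n → R) : v ᵥ* inclusionMatrix R e = v ∘ e := by
  ext j
  simp [inclusionMatrix, vecMul, dotProduct, one_apply]

lemma transpose_inclusionMatrix_mul [DecidableEq m] (e : m ↪ n) :
    (inclusionMatrix R e)ᵀ * inclusionMatrix R e = 1 := by
  rw [inclusionMatrix, transpose_submatrix, transpose_one,
    ← submatrix_mul _ _ _ _ _ Function.bijective_id, one_mul, submatrix_one_embedding]

variable [Fintype m] [DecidableEq m]

/-- The matrix of `SL_n` acting as `A ∈ SL_m` on the coordinates in the range of `e` and trivially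
on the other coordinates. It is written as `1 + P (A - 1) Pᵀ`, with `P` the inclusion matrix, so
that its determinant is that of `1 + (A - 1) Pᵀ P = A`. -/
def extendSL (e : m ↪ n) (A : Matrix.SpecialLinearGroup m R) : Matrix.SpecialLinearGroup n R :=
  ⟨1 + inclusionMatrix R e * (((A : Matrix m m R) - 1) * (inclusionMatrix R e)ᵀ), by
    rw [det_one_add_mul_comm, Matrix.mul_assoc, transpose_inclusionMatrix_mul, Matrix.mul_one,
      add_sub_cancel, A.det_coe]⟩

lemma coe_extendSL (e : m ↪ n) (A : Matrix.SpecialLinearGroup m R) :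
    (extendSL e A : Matrix n n R) =
      1 + inclusionMatrix R e * (((A : Matrix m m R) - 1) * (inclusionMatrix R e)ᵀ) :=
  rfl

lemma map_extendSL (f : R →+* S) (e : m ↪ n) (A : Matrix.SpecialLinearGroup m R) :
    (extendSL e A).map f = extendSL e (A.map f) := by
  apply Subtype.ext
  rw [coe_extendSL, SpecialLinearGroup.map_apply_coe, SpecialLinearGroup.map_apply_coe,
    coe_extendSL, map_add, map_one, RingHom.mapMatrix_apply, Matrix.map_mul, Matrix.map_mul,
    ← RingHom.mapMatrix_apply f (_ - 1), map_sub, map_one, transpose_map, map_inclusionMatrix]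

lemma vecMul_extendSL (e : m ↪ n) (A : Matrix.SpecialLinearGroup m R) (v : n → R) :
    v ᵥ* (extendSL e A : Matrix n n R) =
      v + ((v ∘ e) ᵥ* (A : Matrix m m R) - v ∘ e) ᵥ* (inclusionMatrix R e)ᵀ := by
  rw [coe_extendSL, vecMul_add, vecMul_one, ← vecMul_vecMul, ← vecMul_vecMul,
    vecMul_inclusionMatrix, vecMul_sub, vecMul_one]

lemma vecMul_extendSL_comp (e : m ↪ n) (A : Matrix.SpecialLinearGroup m R) (v : n → R) :
    (v ᵥ* (extendSL e A : Matrix n n R)) ∘ e = (v ∘ e) ᵥ* (A : Matrix m m R) := by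
  rw [← vecMul_inclusionMatrix, vecMul_extendSL, add_vecMul, vecMul_vecMul,
    transpose_inclusionMatrix_mul, vecMul_one, vecMul_inclusionMatrix, add_sub_cancel]

lemma vecMul_extendSL_of_comp_eq_zero (e : m ↪ n) (A : Matrix.SpecialLinearGroup m R) {v : n → R}
    (hv : v ∘ e = 0) : v ᵥ* (extendSL e A : Matrix n n R) = v := by
  rw [vecMul_extendSL, hv, zero_vecMul, sub_zero, zero_vecMul, add_zero]

lemma vecMul_extendSL_apply_of_notMem_range (e : m ↪ n) (A : Matrix.SpecialLinearGroup m R)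
    (v : n → R) {j : n} (hj : j ∉ Set.range e) : (v ᵥ* (extendSL e A : Matrix n n R)) j = v j := by
  have hrow (i : m) : inclusionMatrix R e j i = 0 := one_apply_ne fun h ↦ hj ⟨i, h.symm⟩
  simp only [vecMul_extendSL, vecMul_transpose, Pi.add_apply, mulVec, dotProduct, hrow, zero_mul,
    Finset.sum_const_zero, add_zero]

end ExtendSL

section Bezout

lemma exists_isCoprime_mul_eq_mul {R : Type*} [CommRing R] [IsDomain R] [IsBezout R] (a b : R) :
    ∃ p q : R, IsCoprime p q ∧ a * q = b * p := by
  classical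
  let := IsBezout.toGCDDomain R
  obtain ⟨p, q, ha, hb, hpq⟩ := extract_gcd a b
  refine ⟨p, q, (gcd_isUnit_iff p q).1 hpq, ?_⟩
  calc a * q = gcd a b * q * p := by rw [mul_right_comm, ← ha]
    _ = b * p := by rw [← hb]

variable (R : Type*) {K n : Type*} [CommRing R] [IsDomain R] [IsBezout R]
  [CommRing K] [Algebra R K] [IsFractionRing R K] [Fintype n]

lemma exists_SL2_vecMul_apply_one_eq_zero (v : Fin 2 → K) :
    ∃ A : SL(2, R), (v ᵥ* (A.map (algebraMap R K) : Matrix (Fin 2) (Fin 2) K)) 1 = 0 := by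
  obtain ⟨a, b, d, ha, hb⟩ := IsLocalization.surj₂ (nonZeroDivisors R) K (v 0) (v 1)
  obtain ⟨p, q, hpq, hab⟩ := exists_isCoprime_mul_eq_mul a b
  obtain ⟨A, hA₀, hA₁⟩ := hpq.symm.neg_right.exists_SL2_col 1
  refine ⟨A, (IsLocalization.map_units K d).mul_left_cancel ?_⟩
  have hab' := congrArg (algebraMap R K) hab
  simp only [map_mul, ← ha, ← hb] at hab'
  simp only [vecMul, dotProduct, Fin.sum_univ_two, SpecialLinearGroup.map_apply_coe,
    RingHom.mapMatrix_apply, map_apply, hA₀, hA₁, map_neg]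
  linear_combination hab'

lemma exists_SL_vecMul_eq_zero_and_vecMul_eq_self [DecidableEq n] (v : n → K) {i : n}
    {s : Finset n} (hi : i ∉ s) :
    ∃ k : Matrix.SpecialLinearGroup n R,
      (∀ j ∈ s, (v ᵥ* (k.map (algebraMap R K) : Matrix n n K)) j = 0) ∧
      ∀ w : n → K, (∀ j ∈ insert i s, w j = 0) →
        w ᵥ* (k.map (algebraMap R K) : Matrix n n K) = w := by
  induction s using Finset.induction_on with
  | empty => exact ⟨1, by simp⟩
  | insert j s hj ih =>
    obtain ⟨hij, his⟩ : i ≠ j ∧ i ∉ s := by simpa using hi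
    obtain ⟨k, hk, hfix⟩ := ih his
    let e : Fin 2 ↪ n := ⟨![i, j], injective_pair_iff_ne.2 hij⟩
    let u := v ᵥ* (k.map (algebraMap R K) : Matrix n n K)
    obtain ⟨A, hA⟩ := exists_SL2_vecMul_apply_one_eq_zero R (u ∘ e)
    have hmul (w : n → K) : w ᵥ* ((k * extendSL e A).map (algebraMap R K) : Matrix n n K) =
        (w ᵥ* (k.map (algebraMap R K) : Matrix n n K)) ᵥ*
          (extendSL e (A.map (algebraMap R K)) : Matrix n n K) := by
      rw [map_mul, map_extendSL, Matrix.SpecialLinearGroup.coe_mul, vecMul_vecMul]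
    refine ⟨k * extendSL e A, fun l hl ↦ ?_, fun w hw ↦ ?_⟩
    · rw [hmul]
      obtain rfl | hls := Finset.mem_insert.1 hl
      · rwa [← vecMul_extendSL_comp] at hA
      · have hle : l ∉ Set.range e := by
          rintro ⟨x, rfl⟩
          fin_cases x
          exacts [his hls, hj hls]
        rw [vecMul_extendSL_apply_of_notMem_range e _ _ hle, hk l hls]
    · have hwe : w ∘ e = 0 := by
        ext x
        fin_cases x
        exacts [hw i (by simp), hw j (by simp)]
      rw [hmul, hfix w fun l hl ↦ hw l (by grind), vecMul_extendSL_of_comp_eq_zero e _ hwe]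

lemma exists_SL_mul_blockTriangular [LinearOrder n] (M : Matrix n n K) :
    ∃ k : Matrix.SpecialLinearGroup n R,
      (M * (k.map (algebraMap R K) : Matrix n n K)).BlockTriangular id := by
  suffices h : ∀ s : Finset n, ∃ k : Matrix.SpecialLinearGroup n R,
      ∀ i ∈ s, ∀ j < i, (M * (k.map (algebraMap R K) : Matrix n n K)) i j = 0 by
    obtain ⟨k, hk⟩ := h Finset.univ
    exact ⟨k, fun i j ↦ hk i (Finset.mem_univ i) j⟩
  intro s
  induction s using Finset.induction_on_min with
  | empty => exact ⟨1, by simp⟩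
  | insert a s has ih =>
    obtain ⟨k, hk⟩ := ih
    let N := M * (k.map (algebraMap R K) : Matrix n n K)
    obtain ⟨l, hl, hfix⟩ :=
      exists_SL_vecMul_eq_zero_and_vecMul_eq_self R (N a) (i := a) (s := {j | j < a}) (by simp)
    refine ⟨k * l, fun i hi j hji ↦ ?_⟩
    rw [map_mul, Matrix.SpecialLinearGroup.coe_mul, ← Matrix.mul_assoc, mul_apply_eq_vecMul]
    obtain rfl | his := Finset.mem_insert.1 hi
    · exact hl j (by simpa using hji)
    · have hNi : ∀ b ∈ insert a ({j | j < a} : Finset n), N i b = 0 := fun b hb ↦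
        hk i his b (by grind)
      rw [hfix (N i) hNi]
      exact hk i his j hji

theorem iwasawa_decomposition_general [LinearOrder n] (g : Matrix.SpecialLinearGroup n K) :
    ∃ (b : Matrix.SpecialLinearGroup n K) (k : Matrix.SpecialLinearGroup n R),
      (b : Matrix n n K).BlockTriangular id ∧ g = b * k.map (algebraMap R K) := by
  obtain ⟨k, hk⟩ := exists_SL_mul_blockTriangular R (g : Matrix n n K)
  exact ⟨g * k.map (algebraMap R K), k⁻¹, hk, by rw [map_inv, mul_inv_cancel_right]⟩

end Bezout

end

lemma laurentIsIntegral_coe {F : Type} [Field F] (f : PowerSeries F) :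
    LaurentIsIntegral F (f : LaurentSeries F) :=
  fun m hm ↦ by rw [PowerSeries.coeff_coe, if_pos hm]

theorem iwasawa_decomposition (F : Type) [Field F] (n : ℕ) (hn : 2 ≤ n)
    (g : Matrix.SpecialLinearGroup (Fin n) (LaurentSeries F)) :
    ∃ b k : Matrix.SpecialLinearGroup (Fin n) (LaurentSeries F),
      (∀ i j : Fin n, j < i → (b : Matrix (Fin n) (Fin n) (LaurentSeries F)) i j = 0) ∧
      (∀ i j : Fin n, LaurentIsIntegral F ((k : Matrix (Fin n) (Fin n) (LaurentSeries F)) i j)) ∧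
      g = b * k := by
  obtain ⟨b, k, hb, hg⟩ := iwasawa_decomposition_general (PowerSeries F) g
  exact ⟨b, _, fun i j hij ↦ hb hij, fun i j ↦ laurentIsIntegral_coe (k i j), hg⟩
end
end

section
/- Every nonzero f ∈ K can be written uniquely as f = t1^i·t2^j·u with i, j ∈ ℤ and u ∈ O_K^×; consequently the map (i,j) ↦ t1^i·t2^j·O_K^× is a group isomorphism from ℤ ⊕ ℤ onto K^×/O_K^×. -/
/-!
Every nonzero `f` in the two-dimensional local field `K = F_q((t1))((t2))` is
uniquely `f = t1^i · t2^j · u` with `i, j ∈ ℤ` and `u ∈ O_Kˣ`; consequently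
`(i,j) ↦ t1^i · t2^j · O_Kˣ` is a group isomorphism `ℤ ⊕ ℤ ≃ K^× / O_Kˣ`.
-/

set_option synthInstance.maxHeartbeats 1000000
set_option maxHeartbeats 1000000

noncomputable section

/-- The units of `K` form a commutative group (restated to help instance search
through the iterated Laurent series field structure). -/
noncomputable instance (F : Type) [Field F] : CommGroup (Ktwo F)ˣ :=
  inferInstanceAs (CommGroup (@Units (Ktwo F) (CommMonoid.toMonoid)))

/-- The unit group `O_Kˣ = {f ∈ K1[[t2]]ˣ : the constant coefficient of f in t2
lies in F_q[[t1]]ˣ}`, as a set of elements of `K`. -/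
def OKunits (F : Type) [Field F] : Set (Ktwo F) :=
  {f | (∀ m : ℤ, m < 0 → f.coeff m = 0) ∧
    (∀ m : ℤ, m < 0 → (f.coeff 0).coeff m = 0) ∧
    ((f.coeff 0).coeff 0) ≠ 0}

/-!
Send a unit `f` of `K` to the pair formed by the order of its leading coefficient and its order.
Leading coefficients and orders are multiplicative, so this is a homomorphism to `ℤ × ℤ`. Its kernel
is `O_Kˣ`, and `(i, j) ↦ t1 ^ i * t2 ^ j` splits it. Both assertions hold for every split
homomorphism with its kernel in place of `O_Kˣ`.
-/

section Splitting

variable {A : Type*} [AddGroup A]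

theorem existsUnique_val_eq_section_mul {M : Type*} [Monoid M] (v : Mˣ →* Multiplicative A)
    (s : A → Mˣ) (hs : ∀ a, v (s a) = Multiplicative.ofAdd a) {O : Set M}
    (hO : ∀ u : Mˣ, (u : M) ∈ O ↔ u ∈ v.ker) (f : Mˣ) :
    ∃! p : A × M, p.2 ∈ O ∧ (f : M) = s p.1 * p.2 := by
  refine ⟨((v f).toAdd, ↑((s (v f).toAdd)⁻¹ * f)), ⟨?_, by simp⟩, ?_⟩
  · rw [hO, MonoidHom.mem_ker, map_mul, map_inv, hs, ofAdd_toAdd, inv_mul_cancel]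
  · rintro ⟨b, u⟩ ⟨hu, hfu : (f : M) = s b * u⟩
    obtain rfl : u = ↑((s b)⁻¹ * f) := (Units.eq_inv_mul_iff_mul_eq _).mpr hfu.symm
    have hb : b = (v f).toAdd := by
      have hu_ker : (s b)⁻¹ * f ∈ v.ker := (hO _).mp hu
      rwa [MonoidHom.mem_ker, map_mul, map_inv, hs, inv_mul_eq_one] at hu_ker
    rw [hb]

theorem exists_mulEquiv_quotient_ker {G : Type*} [Group G] (v : G →* Multiplicative A)
    (s : A → G) (hs : ∀ a, v (s a) = Multiplicative.ofAdd a) :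
    ∃ e : Multiplicative A ≃* G ⧸ v.ker, ∀ a, e (Multiplicative.ofAdd a) = QuotientGroup.mk (s a) :=
  ⟨(QuotientGroup.quotientKerEquivOfRightInverse v (fun a ↦ s a.toAdd) fun a ↦ hs a.toAdd).symm,
    fun _ ↦ rfl⟩

end Splitting

section HahnSeries

theorem ne_zero_and_order_eq_iff {Γ R : Type*} [LinearOrder Γ] [Zero Γ] [Zero R]
    {x : HahnSeries Γ R} {g : Γ} :
    x ≠ 0 ∧ x.order = g ↔ (∀ m < g, x.coeff m = 0) ∧ x.coeff g ≠ 0 := by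
  constructor
  · rintro ⟨hx, rfl⟩
    exact ⟨fun _ ↦ HahnSeries.coeff_eq_zero_of_lt_order,
      HahnSeries.coeff_order_eq_zero.not.mpr hx⟩
  · rintro ⟨hlt, hg⟩
    have hx : x ≠ 0 := HahnSeries.ne_zero_of_coeff_ne_zero hg
    exact ⟨hx, (HahnSeries.order_le_of_coeff_ne_zero hg).antisymm
      ((HahnSeries.le_order_iff_forall hx).mpr hlt)⟩

variable {Γ Δ R : Type*} [AddCommMonoid Γ] [LinearOrder Γ] [IsOrderedCancelAddMonoid Γ]
  [AddCommMonoid Δ] [LinearOrder Δ] [IsOrderedCancelAddMonoid Δ] [Semiring R] [NoZeroDivisors R]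

/-- The leading coefficient as a multiplicative map, so that `Units.map` carries units of a Hahn
series ring to units of its coefficient ring. -/
def leadingCoeffHom : HahnSeries Γ R →* R where
  toFun := HahnSeries.leadingCoeff
  map_one' := HahnSeries.leadingCoeff_one
  map_mul' x y := HahnSeries.leadingCoeff_mul x y

variable [Nontrivial R]

/-- The order of a Hahn series as a homomorphism on units, with values in `Multiplicative Γ` since
orders add under multiplication. -/
def unitsOrder : (HahnSeries Γ R)ˣ →* Multiplicative Γ where
  toFun f := Multiplicative.ofAdd f.val.order
  map_one' := congrArg Multiplicative.ofAdd HahnSeries.order_one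
  map_mul' f g := congrArg Multiplicative.ofAdd (HahnSeries.order_mul f.ne_zero g.ne_zero)

/-- The rank-two valuation on the units of an iterated Hahn series ring. The order in the outer
variable is the second component, so that `t1 ^ i * t2 ^ j` has value `(i, j)`. -/
def rankTwoOrder : (HahnSeries Γ (HahnSeries Δ R))ˣ →* Multiplicative (Δ × Γ) :=
  (MulEquiv.prodMultiplicative Δ Γ).symm.toMonoidHom.comp
    ((unitsOrder.comp (Units.map leadingCoeffHom)).prod unitsOrder)

theorem rankTwoOrder_apply (f : (HahnSeries Γ (HahnSeries Δ R))ˣ) :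
    rankTwoOrder f = Multiplicative.ofAdd (f.val.leadingCoeff.order, f.val.order) :=
  rfl

theorem rankTwoOrder_of_val_eq_single {f : (HahnSeries Γ (HahnSeries Δ R))ˣ}
    {g : Γ} {d : Δ} {r : R} (hr : r ≠ 0)
    (hf : f.val = HahnSeries.single g (HahnSeries.single d r)) :
    rankTwoOrder f = Multiplicative.ofAdd (d, g) := by
  rw [rankTwoOrder_apply, hf, HahnSeries.leadingCoeff_of_single, HahnSeries.order_single hr,
    HahnSeries.order_single (HahnSeries.single_ne_zero hr)]

theorem mem_ker_rankTwoOrder_iff {f : (HahnSeries Γ (HahnSeries Δ R))ˣ} :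
    f ∈ rankTwoOrder.ker ↔
      (∀ m < 0, f.val.coeff m = 0) ∧
        (∀ m < 0, (f.val.coeff 0).coeff m = 0) ∧ (f.val.coeff 0).coeff 0 ≠ 0 :=
  calc
    f ∈ rankTwoOrder.ker ↔ f.val.order = 0 ∧ f.val.leadingCoeff.order = 0 := by
      rw [MonoidHom.mem_ker, rankTwoOrder_apply, ofAdd_eq_one, Prod.mk_eq_zero, and_comm]
    _ ↔ f.val.order = 0 ∧ (f.val.coeff 0).order = 0 :=
      and_congr_right fun h_order ↦ by rw [HahnSeries.leadingCoeff_eq, h_order]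
    _ ↔ (f.val ≠ 0 ∧ f.val.order = 0) ∧ (f.val.coeff 0).order = 0 := by
      rw [and_iff_right f.ne_zero]
    _ ↔ (∀ m < 0, f.val.coeff m = 0) ∧ f.val.coeff 0 ≠ 0 ∧ (f.val.coeff 0).order = 0 := by
      rw [ne_zero_and_order_eq_iff, and_assoc]
    _ ↔ _ := and_congr_right' ne_zero_and_order_eq_iff

end HahnSeries

section LocalParameters

variable (F : Type) [Field F]

theorem mem_OKunits_iff (u : (Ktwo F)ˣ) :
    (u : Ktwo F) ∈ OKunits F ↔ u ∈ (rankTwoOrder (Γ := ℤ) (Δ := ℤ) (R := F)).ker :=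
  mem_ker_rankTwoOrder_iff.symm

/-- The monomial `t1 ^ i * t2 ^ j` attached to `p = (i, j)`, as a unit of `K`: the section of
`rankTwoOrder` that splits it. -/
def localMonomial (ht1 : tone F ≠ 0) (ht2 : ttwo F ≠ 0) (p : ℤ × ℤ) : (Ktwo F)ˣ :=
  Units.mk0 (tone F) ht1 ^ p.1 * Units.mk0 (ttwo F) ht2 ^ p.2

theorem val_localMonomial (ht1 : tone F ≠ 0) (ht2 : ttwo F ≠ 0) (p : ℤ × ℤ) :
    (localMonomial F ht1 ht2 p : Ktwo F) = tone F ^ p.1 * ttwo F ^ p.2 := by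
  rw [localMonomial, Units.val_mul, Units.val_zpow_eq_zpow_val, Units.val_zpow_eq_zpow_val]
  rfl

theorem rankTwoOrder_localMonomial (ht1 : tone F ≠ 0) (ht2 : ttwo F ≠ 0) (p : ℤ × ℤ) :
    rankTwoOrder (localMonomial F ht1 ht2 p) = Multiplicative.ofAdd p := by
  have h_tone : rankTwoOrder (Units.mk0 (tone F) ht1) = Multiplicative.ofAdd (1, 0) :=
    rankTwoOrder_of_val_eq_single one_ne_zero rfl
  have h_ttwo : rankTwoOrder (Units.mk0 (ttwo F) ht2) = Multiplicative.ofAdd (0, 1) :=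
    rankTwoOrder_of_val_eq_single one_ne_zero rfl
  rw [localMonomial, map_mul, map_zpow, map_zpow, h_tone, h_ttwo, ← ofAdd_zsmul,
    ← ofAdd_zsmul, ← ofAdd_add]
  simp

end LocalParameters

theorem local_parameters_decomposition_general (F : Type) [Field F]
    (ht1 : tone F ≠ 0) (ht2 : ttwo F ≠ 0) :
    (∀ f : Ktwo F, f ≠ 0 →
      ∃! p : (ℤ × ℤ) × Ktwo F, p.2 ∈ OKunits F ∧
        f = (tone F) ^ p.1.1 * (ttwo F) ^ p.1.2 * p.2) ∧
    (∃ U : Subgroup (Ktwo F)ˣ,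
      ((U : Set (Ktwo F)ˣ) = {u : (Ktwo F)ˣ | (u : Ktwo F) ∈ OKunits F}) ∧
      ∃ e : Multiplicative (ℤ × ℤ) ≃* ((Ktwo F)ˣ ⧸ U),
        ∀ i j : ℤ, e (Multiplicative.ofAdd (i, j)) =
          QuotientGroup.mk (Units.mk0 (tone F) ht1 ^ i * Units.mk0 (ttwo F) ht2 ^ j)) := by
  constructor
  · intro f hf
    lift f to (Ktwo F)ˣ using hf.isUnit
    simpa only [val_localMonomial] using existsUnique_val_eq_section_mul rankTwoOrder
      (localMonomial F ht1 ht2) (rankTwoOrder_localMonomial F ht1 ht2) (mem_OKunits_iff F) f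
  · obtain ⟨e, he⟩ := exists_mulEquiv_quotient_ker rankTwoOrder
      (localMonomial F ht1 ht2) (rankTwoOrder_localMonomial F ht1 ht2)
    exact ⟨_, Set.ext fun u ↦ (mem_OKunits_iff F u).symm, e, fun i j ↦ he (i, j)⟩

theorem local_parameters_decomposition (F : Type) [Field F] [Fintype F]
    (ht1 : tone F ≠ 0) (ht2 : ttwo F ≠ 0) :
    (∀ f : Ktwo F, f ≠ 0 →
      ∃! p : (ℤ × ℤ) × Ktwo F, p.2 ∈ OKunits F ∧
        f = (tone F) ^ p.1.1 * (ttwo F) ^ p.1.2 * p.2) ∧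
    (∃ U : Subgroup (Ktwo F)ˣ,
      ((U : Set (Ktwo F)ˣ) = {u : (Ktwo F)ˣ | (u : Ktwo F) ∈ OKunits F}) ∧
      ∃ e : Multiplicative (ℤ × ℤ) ≃* ((Ktwo F)ˣ ⧸ U),
        ∀ i j : ℤ, e (Multiplicative.ofAdd (i, j)) =
          QuotientGroup.mk (Units.mk0 (tone F) ht1 ^ i * Units.mk0 (ttwo F) ht2 ^ j)) :=
  local_parameters_decomposition_general F ht1 ht2
end
end
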